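/- On finite traces, ◇□(φ ∨ ψ) is equivalent to ◇□φ ∨ ◇□ψ; this equivalence fails on infinite traces (there is an infinite trace and atoms p, q such that ◇□(p ∨ q) holds but neither ◇□p nor ◇□q holds). -/

import Mathlib

inductive Fml (P : Type) : Type
  | atom : P → Fml P
  | tru : Fml P
  | neg : Fml P → Fml P
  | and : Fml P → Fml P → Fml P
  | or : Fml P → Fml P → Fml P
  | untl : Fml P → Fml P → Fml P

namespace Fml

/-- Satisfaction on a finite trace of length `l` (time points `[0, l]`),
with strict until. -/
def FinSat {P : Type} (σ : ℕ → P → Prop) (l : ℕ) : Fml P → ℕ → Prop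
  | atom p, n => σ n p
  | tru, _ => True
  | neg φ, n => ¬ FinSat σ l φ n
  | and φ ψ, n => FinSat σ l φ n ∧ FinSat σ l ψ n
  | or φ ψ, n => FinSat σ l φ n ∨ FinSat σ l ψ n
  | untl φ ψ, n => ∃ m, n < m ∧ m ≤ l ∧ FinSat σ l ψ m ∧ ∀ i, n < i → i < m → FinSat σ l φ i

/-- Satisfaction on an infinite trace, with strict until. -/
def InfSat {P : Type} (σ : ℕ → P → Prop) : Fml P → ℕ → Prop
  | atom p, n => σ n p
  | tru, _ => True
  | neg φ, n => ¬ InfSat σ φ n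
  | and φ ψ, n => InfSat σ φ n ∧ InfSat σ ψ n
  | or φ ψ, n => InfSat σ φ n ∨ InfSat σ ψ n
  | untl φ ψ, n => ∃ m, n < m ∧ InfSat σ ψ m ∧ ∀ i, n < i → i < m → InfSat σ φ i

def fls {P : Type} : Fml P := neg tru
/-- strong (strict) next: ◯φ := ⊥ U φ -/
def nextS {P : Type} (φ : Fml P) : Fml P := untl fls φ
/-- last := □⊥, i.e. ¬(⊤ U ⊤) -/
def lastF {P : Type} : Fml P := neg (untl tru tru)
/-- weak next: ●φ := ¬◯¬φ -/
def wnext {P : Type} (φ : Fml P) : Fml P := neg (nextS (neg φ))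
/-- strict eventually: ◇φ := ⊤ U φ -/
def evS {P : Type} (φ : Fml P) : Fml P := untl tru φ
/-- reflexive eventually: ◇⁺φ := φ ∨ ◇φ -/
def evP {P : Type} (φ : Fml P) : Fml P := Fml.or φ (evS φ)
/-- strict always: □φ := ¬◇¬φ -/
def alwS {P : Type} (φ : Fml P) : Fml P := neg (evS (neg φ))
/-- reflexive always: □⁺φ := φ ∧ □φ -/
def alwP {P : Type} (φ : Fml P) : Fml P := Fml.and φ (alwS φ)

/-- `Agrees I σ l` : the traces `I` and `σ` agree on the time points `[0, l]`.
Used both for "the infinite trace `I` is an extension of the finite trace `(σ, l)`"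
and for "the finite trace `(σ, l)` is a prefix of the infinite trace `I`". -/
def Agrees {P : Type} (I : ℕ → P → Prop) (σ : ℕ → P → Prop) (l : ℕ) : Prop :=
  ∀ i ≤ l, ∀ p, I i p ↔ σ i p

/-- F⇒∃ : satisfaction on a finite trace implies satisfaction on some infinite extension. -/
def FimpE {P : Type} (χ : Fml P) : Prop :=
  ∀ (σ : ℕ → P → Prop) (l : ℕ), FinSat σ l χ 0 → ∃ I, Agrees I σ l ∧ InfSat I χ 0

/-- F⇒∀ : satisfaction on a finite trace implies satisfaction on every infinite extension. -/
def FimpA {P : Type} (χ : Fml P) : Prop :=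
  ∀ (σ : ℕ → P → Prop) (l : ℕ), FinSat σ l χ 0 → ∀ I, Agrees I σ l → InfSat I χ 0

/-- F⇐∃ : satisfaction on some infinite extension implies satisfaction on the finite trace. -/
def FrevE {P : Type} (χ : Fml P) : Prop :=
  ∀ (σ : ℕ → P → Prop) (l : ℕ), (∃ I, Agrees I σ l ∧ InfSat I χ 0) → FinSat σ l χ 0

/-- F⇐∀ : satisfaction on all infinite extensions implies satisfaction on the finite trace. -/
def FrevA {P : Type} (χ : Fml P) : Prop :=
  ∀ (σ : ℕ → P → Prop) (l : ℕ), (∀ I, Agrees I σ l → InfSat I χ 0) → FinSat σ l χ 0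

/-- I⇒∀ : satisfaction on an infinite trace implies satisfaction on every finite prefix. -/
def IimpA {P : Type} (χ : Fml P) : Prop :=
  ∀ I : ℕ → P → Prop, InfSat I χ 0 → ∀ (σ : ℕ → P → Prop) (l : ℕ), Agrees I σ l → FinSat σ l χ 0

/-- I⇒∃ : satisfaction on an infinite trace implies satisfaction on some finite prefix. -/
def IimpE {P : Type} (χ : Fml P) : Prop :=
  ∀ I : ℕ → P → Prop, InfSat I χ 0 → ∃ (σ : ℕ → P → Prop) (l : ℕ), Agrees I σ l ∧ FinSat σ l χ 0

end Fml

namespace Fml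

variable {P : Type}

theorem finSat_evS {σ : ℕ → P → Prop} {l n : ℕ} {φ : Fml P} :
    FinSat σ l (evS φ) n ↔ ∃ m, n < m ∧ m ≤ l ∧ FinSat σ l φ m := by
  simp [evS, FinSat]

theorem finSat_alwS {σ : ℕ → P → Prop} {l n : ℕ} {φ : Fml P} :
    FinSat σ l (alwS φ) n ↔ ∀ m, n < m → m ≤ l → FinSat σ l φ m := by
  simp [alwS, evS, FinSat]

theorem infSat_evS {σ : ℕ → P → Prop} {n : ℕ} {φ : Fml P} :
    InfSat σ (evS φ) n ↔ ∃ m, n < m ∧ InfSat σ φ m := by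
  simp [evS, InfSat]

theorem infSat_alwS {σ : ℕ → P → Prop} {n : ℕ} {φ : Fml P} :
    InfSat σ (alwS φ) n ↔ ∀ m, n < m → InfSat σ φ m := by
  simp [alwS, evS, InfSat]

/-- Since `□φ` holds vacuously at the last instant, `◇□φ` only says that the current instant is
not the last one. -/
theorem finSat_evS_alwS {σ : ℕ → P → Prop} {l n : ℕ} {φ : Fml P} :
    FinSat σ l (evS (alwS φ)) n ↔ n < l := by
  rw [finSat_evS]
  constructor
  · rintro ⟨m, hnm, hml, -⟩
    exact hnm.trans_le hml
  · intro h
    exact ⟨l, h, le_rfl, finSat_alwS.2 fun m hlm hml => absurd hml hlm.not_ge⟩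

end Fml

theorem stmt_4 :
    (∀ (P : Type) (φ ψ : Fml P) (σ : ℕ → P → Prop) (l n : ℕ), n ≤ l →
      (Fml.FinSat σ l (Fml.evS (Fml.alwS (Fml.or φ ψ))) n ↔
        Fml.FinSat σ l (Fml.or (Fml.evS (Fml.alwS φ)) (Fml.evS (Fml.alwS ψ))) n)) ∧
    (∃ (P : Type) (σ : ℕ → P → Prop) (p q : P),
      Fml.InfSat σ (Fml.evS (Fml.alwS (Fml.or (Fml.atom p) (Fml.atom q)))) 0 ∧
      ¬ Fml.InfSat σ (Fml.evS (Fml.alwS (Fml.atom p))) 0 ∧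
      ¬ Fml.InfSat σ (Fml.evS (Fml.alwS (Fml.atom q))) 0) := by
  refine ⟨fun P φ ψ σ l n _ => ?_, Bool, fun n b => n.bodd = b, true, false, ?_, ?_, ?_⟩
  · rw [Fml.finSat_evS_alwS, Fml.FinSat, Fml.finSat_evS_alwS, Fml.finSat_evS_alwS, or_self]
  · refine Fml.infSat_evS.2 ⟨1, one_pos, Fml.infSat_alwS.2 fun m _ => ?_⟩
    simp [Fml.InfSat]
  all_goals
    simp only [Fml.infSat_evS, Fml.infSat_alwS, Fml.InfSat]
    rintro ⟨m, -, h⟩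
    have h₁ := h (m + 1) (by lia)
    have h₂ := h (m + 2) (by lia)
    simp_all [Nat.bodd_succ]
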